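/- Let q ≥ 3, α = 1/(2q) and d = (2q-1) log q - c with c = O(1) as q → ∞. Then Σ_{d,q}(α) = (c-1)/(2q) + Õ(q^{-2}), where Õ suppresses polylogarithmic factors in q. Consequently, if c ≤ 1 - ε for a fixed ε > 0, then Σ_{d,q}(α) < 0 for all sufficiently large q. -/

import Mathlib

open Real Filter Asymptotics Finset

/-- The complexity `Σ_{d,q}(α)` with a real degree parameter `d` (real power). -/
noncomputable def SigmaRSBReal (d : ℝ) (q : ℕ) (α : ℝ) : ℝ :=
  Real.log (∑ i ∈ range q,
      (-1 : ℝ) ^ i * (q.choose (i + 1)) * (1 - (i + 1) * (1 - α) / q) ^ d) -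
    (d / 2) * Real.log (1 - (1 - α) ^ 2 / q)

/-!
Write `L = log q` and let `α = Õ(1/q)` be nonnegative. In absolute value the summand of
index `i` (from `0`) is at most `y ^ (i + 1)` with `y = q * exp (-(1 - α) * d / q) = Õ(1/q)`, so up
to `Õ(q⁻³)` only the first two summands matter, and Taylor expansion gives
`log (sum) = -L + 2 L α + c / q - 1 / (2 q) + Õ(q⁻²)`.
On the other hand `(d / 2) * log (1 - (1 - α)² / q) = -L + 2 L α + c / (2 q) + Õ(q⁻²)`.
In the difference the terms in `α` cancel: to this order the complexity does not depend on `α`.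
-/

/-- `IsSoftO m f` says that `f = Õ(q ^ m)`: polylogarithmic factors in `q` are suppressed. -/
def IsSoftO (m : ℤ) (f : ℕ → ℝ) : Prop :=
  ∃ K : ℕ, f =O[atTop] fun q : ℕ => Real.log q ^ K * (q : ℝ) ^ m

theorem isSoftO_neg_natCast_iff {n : ℕ} {f : ℕ → ℝ} :
    IsSoftO (-n) f ↔ ∃ K : ℕ, f =O[atTop] fun q : ℕ => Real.log q ^ K / (q : ℝ) ^ n := by
  simp only [IsSoftO, zpow_neg, zpow_natCast, div_eq_mul_inv]

theorem eventually_one_le_log_natCast : ∀ᶠ q : ℕ in atTop, 1 ≤ Real.log q :=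
  (Real.tendsto_log_atTop.comp tendsto_natCast_atTop_atTop).eventually_ge_atTop 1

theorem log_pow_mul_zpow_isBigO {K K' : ℕ} {m n : ℤ} (hK : K ≤ K') (hm : m ≤ n) :
    (fun q : ℕ => Real.log q ^ K * (q : ℝ) ^ m) =O[atTop]
      fun q : ℕ => Real.log q ^ K' * (q : ℝ) ^ n := by
  refine IsBigO.of_bound 1 ?_
  filter_upwards [eventually_one_le_log_natCast, eventually_ge_atTop 1] with q hq_log hq
  have hq' : (1 : ℝ) ≤ q := by exact_mod_cast hq
  rw [Real.norm_of_nonneg (by positivity), Real.norm_of_nonneg (by positivity), one_mul]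
  gcongr

namespace IsSoftO

variable {m n : ℤ} {f g x : ℕ → ℝ}

theorem of_isBigO_zpow (h : f =O[atTop] fun q : ℕ => (q : ℝ) ^ m) : IsSoftO m f :=
  ⟨0, by simpa using h⟩

theorem of_abs_le {M : ℝ} (h : ∀ q, |f q| ≤ M) : IsSoftO 0 f :=
  of_isBigO_zpow (IsBigO.of_bound M (Eventually.of_forall fun q => by simpa using h q))

theorem const (a : ℝ) : IsSoftO 0 fun _ => a :=
  of_abs_le fun _ => le_rfl

theorem natCast : IsSoftO 1 fun q => (q : ℝ) :=
  of_isBigO_zpow (by simpa using isBigO_refl _ _)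

theorem natCast_inv : IsSoftO (-1) fun q => (q : ℝ)⁻¹ :=
  of_isBigO_zpow (by simpa using isBigO_refl _ _)

theorem log : IsSoftO 0 fun q => Real.log q :=
  ⟨1, by simpa using isBigO_refl _ _⟩

theorem mono (hf : IsSoftO m f) (h : m ≤ n) : IsSoftO n f :=
  let ⟨K, hK⟩ := hf
  ⟨K, hK.trans (log_pow_mul_zpow_isBigO le_rfl h)⟩

theorem of_isBigO (hg : IsSoftO m g) (h : f =O[atTop] g) : IsSoftO m f :=
  let ⟨K, hK⟩ := hg
  ⟨K, h.trans hK⟩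

theorem congr' (hg : IsSoftO m g) (h : f =ᶠ[atTop] g) : IsSoftO m f :=
  hg.of_isBigO h.isBigO

theorem congr (hg : IsSoftO m g) (h : ∀ q, f q = g q) : IsSoftO m f :=
  hg.congr' (Eventually.of_forall h)

theorem add (hf : IsSoftO m f) (hg : IsSoftO m g) : IsSoftO m fun q => f q + g q :=
  let ⟨K, hK⟩ := hf
  let ⟨K', hK'⟩ := hg
  ⟨K + K', (hK.trans (log_pow_mul_zpow_isBigO (by omega) le_rfl)).add
    (hK'.trans (log_pow_mul_zpow_isBigO (by omega) le_rfl))⟩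

theorem neg (hf : IsSoftO m f) : IsSoftO m fun q => -f q :=
  let ⟨K, hK⟩ := hf
  ⟨K, hK.neg_left⟩

theorem sub (hf : IsSoftO m f) (hg : IsSoftO m g) : IsSoftO m fun q => f q - g q :=
  (hf.add hg.neg).congr fun _ => sub_eq_add_neg _ _

theorem mul (hf : IsSoftO m f) (hg : IsSoftO n g) : IsSoftO (m + n) fun q => f q * g q := by
  obtain ⟨K, hK⟩ := hf
  obtain ⟨K', hK'⟩ := hg
  refine ⟨K + K', (hK.mul hK').trans_eventuallyEq ?_⟩
  filter_upwards [eventually_ne_atTop 0] with q hq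
  rw [zpow_add₀ (Nat.cast_ne_zero.mpr hq)]
  ring

theorem const_mul (a : ℝ) (hf : IsSoftO m f) : IsSoftO m fun q => a * f q :=
  ((const a).mul hf).mono (zero_add m).le

theorem one_div_const_mul_natCast (a : ℝ) : IsSoftO (-1) fun q => 1 / (a * q) :=
  (natCast_inv.const_mul a⁻¹).congr fun q => by rw [one_div, mul_inv]

theorem pow (hf : IsSoftO m f) (k : ℕ) : IsSoftO (k * m) fun q => f q ^ k := by
  obtain ⟨K, hK⟩ := hf
  refine ⟨K * k, (hK.pow k).congr_right fun q => ?_⟩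
  rw [mul_pow, ← pow_mul, mul_comm (k : ℤ), zpow_mul, zpow_natCast]

theorem tendsto_zero (hf : IsSoftO m f) (hm : m < 0) : Tendsto f atTop (nhds 0) := by
  obtain ⟨K, hK⟩ := hf.mono (Int.le_sub_one_of_lt hm)
  have hlog : Tendsto (fun q : ℕ => Real.log q ^ K / (q : ℝ)) atTop (nhds 0) :=
    isLittleO_pow_log_id_atTop.tendsto_div_nhds_zero.comp tendsto_natCast_atTop_atTop
  exact hK.trans_tendsto (hlog.congr fun q => by simp [div_eq_mul_inv])

theorem eventually_lt (hf : IsSoftO m f) (hm : m < 0) {δ : ℝ} (hδ : 0 < δ) :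
    ∀ᶠ q in atTop, f q < δ :=
  (hf.tendsto_zero hm).eventually_lt_const hδ

theorem comp_isBigO_pow {φ : ℝ → ℝ} {k : ℕ} (hx : IsSoftO m x) (hm : m < 0)
    (hφ : φ =O[nhds 0] fun t => t ^ k) : IsSoftO (k * m) fun q => φ (x q) :=
  (hx.pow k).of_isBigO (hφ.comp_tendsto (hx.tendsto_zero hm))

end IsSoftO

theorem sum_add_log_one_sub_isBigO_pow (n : ℕ) :
    (fun t : ℝ => ∑ i ∈ range n, t ^ (i + 1) / (i + 1) + Real.log (1 - t)) =O[nhds 0]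
      fun t => t ^ (n + 1) := by
  refine IsBigO.of_bound 2 ?_
  filter_upwards [eventually_abs_sub_lt 0 (one_half_pos (α := ℝ))] with t ht
  rw [sub_zero] at ht
  refine (abs_log_sub_add_sum_range_le (by linarith) n).trans ?_
  rw [norm_pow, Real.norm_eq_abs, div_le_iff₀ (by linarith)]
  nlinarith [pow_nonneg (abs_nonneg t) (n + 1)]

namespace IsSoftO

variable {m : ℤ} {x : ℕ → ℝ}

theorem log_one_sub_add (hx : IsSoftO m x) (hm : m < 0) :
    IsSoftO (2 * m) fun q => Real.log (1 - x q) + x q :=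
  (hx.comp_isBigO_pow hm (sum_add_log_one_sub_isBigO_pow 1)).congr fun q => by
    norm_num [add_comm]

theorem log_one_sub_add_add_sq (hx : IsSoftO m x) (hm : m < 0) :
    IsSoftO (3 * m) fun q => Real.log (1 - x q) + x q + x q ^ 2 / 2 :=
  (hx.comp_isBigO_pow hm (sum_add_log_one_sub_isBigO_pow 2)).congr fun q => by
    simp only [sum_range_succ, sum_range_zero, Nat.cast_zero, Nat.cast_one]
    ring

theorem exp (hx : IsSoftO m x) (hm : m < 0) : IsSoftO 0 fun q => Real.exp (x q) :=
  ((hx.comp_isBigO_pow hm (exp_sub_sum_range_isBigO_pow 0)).mono (by simp)).congr fun q => by simp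

theorem exp_sub_one_sub (hx : IsSoftO m x) (hm : m < 0) :
    IsSoftO (2 * m) fun q => Real.exp (x q) - 1 - x q :=
  (hx.comp_isBigO_pow hm (exp_sub_sum_range_isBigO_pow 2)).congr fun q => by
    simp [sum_range_succ, sub_sub]

end IsSoftO

/-- The `i`-th summand of the alternating sum inside the logarithm of `Σ_{d,q}(α)`. -/
noncomputable def sigmaTerm (d : ℝ) (q : ℕ) (α : ℝ) (i : ℕ) : ℝ :=
  (-1 : ℝ) ^ i * (q.choose (i + 1)) * (1 - (i + 1) * (1 - α) / q) ^ d

/-- The ratio `y` of the geometric series dominating the alternating sum of `Σ_{d,q}(α)`. -/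
noncomputable def sigmaRatio (d : ℝ) (q : ℕ) (α : ℝ) : ℝ :=
  q * Real.exp (-((1 - α) * d / q))

section Truncation

variable {d α : ℝ} {q : ℕ}

theorem sigmaRatio_nonneg : 0 ≤ sigmaRatio d q α := by
  unfold sigmaRatio
  positivity

theorem abs_sigmaTerm_le (hd : 0 ≤ d) (hα : 0 ≤ α) {i : ℕ} (hi : i < q) :
    |sigmaTerm d q α i| ≤ sigmaRatio d q α ^ (i + 1) := by
  have hq : (0 : ℝ) < q := by exact_mod_cast i.zero_le.trans_lt hi
  have hiq : (i : ℝ) + 1 ≤ q := by exact_mod_cast hi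
  have hbase : 0 ≤ 1 - (i + 1) * (1 - α) / q := by
    rw [sub_nonneg, div_le_one hq]
    nlinarith
  have hchoose : (q.choose (i + 1) : ℝ) ≤ (q : ℝ) ^ (i + 1) := by
    exact_mod_cast Nat.choose_le_pow q (i + 1)
  have hpow : (1 - (i + 1) * (1 - α) / q) ^ d ≤ Real.exp (-((1 - α) * d / q)) ^ (i + 1) :=
    calc (1 - (i + 1) * (1 - α) / q) ^ d
        ≤ Real.exp (-((i + 1) * (1 - α) / q)) ^ d :=
          Real.rpow_le_rpow hbase (Real.one_sub_le_exp_neg _) hd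
      _ = Real.exp (-((1 - α) * d / q)) ^ (i + 1) := by
          rw [← Real.exp_mul, ← Real.exp_nat_mul]
          push_cast
          ring_nf
  rw [sigmaTerm, sigmaRatio, mul_pow, abs_mul, abs_mul, abs_neg_one_pow, one_mul, Nat.abs_cast,
    abs_of_nonneg (Real.rpow_nonneg hbase d)]
  gcongr

theorem abs_sum_sigmaTerm_sub_sum_le (hd : 0 ≤ d) (hα : 0 ≤ α) (hy : sigmaRatio d q α < 1)
    {k : ℕ} (hk : k ≤ q) :
    |∑ i ∈ range q, sigmaTerm d q α i - ∑ i ∈ range k, sigmaTerm d q α i|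
      ≤ sigmaRatio d q α ^ (k + 1) / (1 - sigmaRatio d q α) := by
  rw [← sum_Ico_eq_sub _ hk]
  calc |∑ i ∈ Ico k q, sigmaTerm d q α i|
      ≤ ∑ i ∈ Ico k q, |sigmaTerm d q α i| := abs_sum_le_sum_abs _ _
    _ ≤ ∑ i ∈ Ico k q, sigmaRatio d q α ^ (i + 1) :=
        sum_le_sum fun i hi => abs_sigmaTerm_le hd hα (mem_Ico.mp hi).2
    _ = ∑ i ∈ Ico (k + 1) (q + 1), sigmaRatio d q α ^ i := by rw [sum_Ico_add']
    _ ≤ sigmaRatio d q α ^ (k + 1) / (1 - sigmaRatio d q α) :=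
        geom_sum_Ico_le_of_lt_one sigmaRatio_nonneg hy

end Truncation

/-- The degree `d = (2q - 1) log q - c`, where `c` parametrizes the window in which the complexity
changes sign (at `c = 1` to leading order). -/
noncomputable def thresholdDegree (c : ℝ) (q : ℕ) : ℝ :=
  (2 * q - 1) * Real.log q - c

section Asymptotics

variable {c α : ℕ → ℝ}

theorem isSoftO_thresholdDegree (hc : IsSoftO 0 c) :
    IsSoftO 1 fun q => thresholdDegree (c q) q :=
  have hlin : IsSoftO 1 fun q => 2 * (q : ℝ) - 1 :=
    (IsSoftO.natCast.const_mul 2).sub ((IsSoftO.const 1).mono zero_le_one)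
  (hlin.mul IsSoftO.log).sub (hc.mono zero_le_one)

theorem isSoftO_thresholdDegree_div_sub (hc : IsSoftO 0 c) :
    IsSoftO (-1) fun q => thresholdDegree (c q) q / q - 2 * Real.log q := by
  refine (IsSoftO.natCast_inv.mul (IsSoftO.log.add hc)).neg.congr' ?_
  filter_upwards [eventually_ne_atTop 0] with q hq
  rw [thresholdDegree]
  field_simp
  ring

theorem eventually_thresholdDegree_nonneg (hc : IsSoftO 0 c) :
    ∀ᶠ q in atTop, 0 ≤ thresholdDegree (c q) q := by
  filter_upwards [(isSoftO_thresholdDegree_div_sub hc).neg.eventually_lt (by norm_num) one_pos,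
    eventually_one_le_log_natCast, eventually_gt_atTop 0] with q hdiv hq_log hq
  have hq' : (0 : ℝ) < q := by exact_mod_cast hq
  have hpos : 0 ≤ thresholdDegree (c q) q / q := by linarith
  simpa using (le_div_iff₀ hq').mp hpos

theorem isSoftO_thresholdDegree_mul_log_one_sub_div (hc : IsSoftO 0 c) {x : ℕ → ℝ} {a : ℝ}
    (hx : IsSoftO (-1) fun q => x q - a) :
    IsSoftO (-2) fun q => thresholdDegree (c q) q * Real.log (1 - x q / q) -
      (-2 * Real.log q * x q + (a * (Real.log q + c q) - a ^ 2 * Real.log q) / q) := by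
  have hx0 : IsSoftO 0 x :=
    ((hx.mono (by norm_num)).add (IsSoftO.const a)).congr fun q => by ring
  have hlogc : IsSoftO 0 fun q => Real.log q + c q := IsSoftO.log.add hc
  have hxq : IsSoftO (-1) fun q => x q / q := hx0.mul IsSoftO.natCast_inv
  have htaylor : IsSoftO (-2) fun q => thresholdDegree (c q) q *
      (Real.log (1 - x q / q) + x q / q + (x q / q) ^ 2 / 2) :=
    (isSoftO_thresholdDegree hc).mul (hxq.log_one_sub_add_add_sq (by norm_num))
  have hshift : IsSoftO (-2) fun q =>
      (x q - a) * (q : ℝ)⁻¹ * (Real.log q + c q - Real.log q * (x q + a)) :=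
    (hx.mul IsSoftO.natCast_inv).mul
      (hlogc.sub (IsSoftO.log.mul (hx0.add (IsSoftO.const a))))
  have hsq : IsSoftO (-2) fun q => (x q / q) ^ 2 * (2⁻¹ * (Real.log q + c q)) :=
    (hxq.pow 2).mul (hlogc.const_mul 2⁻¹)
  refine ((htaylor.add hshift).add hsq).congr' ?_
  filter_upwards [eventually_ne_atTop 0] with q hq
  rw [thresholdDegree]
  field_simp
  ring

theorem isSoftO_sigmaRatio (hc : IsSoftO 0 c) (hα : IsSoftO (-1) α) :
    IsSoftO (-1) fun q => sigmaRatio (thresholdDegree (c q) q) q (α q) := by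
  have hd := isSoftO_thresholdDegree_div_sub hc
  have hαd : IsSoftO (-1) fun q => α q * (thresholdDegree (c q) q * (q : ℝ)⁻¹) :=
    hα.mul ((isSoftO_thresholdDegree hc).mul IsSoftO.natCast_inv)
  refine (IsSoftO.natCast_inv.mul ((hαd.sub hd).exp (by norm_num))).congr' ?_
  filter_upwards [eventually_gt_atTop 0] with q hq
  have hq' : (0 : ℝ) < q := by exact_mod_cast hq
  have hexp : -((1 - α q) * thresholdDegree (c q) q / q) =
      α q * (thresholdDegree (c q) q * (q : ℝ)⁻¹) -
        (thresholdDegree (c q) q / q - 2 * Real.log q) - Real.log q - Real.log q := by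
    ring
  rw [sigmaRatio, hexp, Real.exp_sub _ (Real.log q), Real.exp_sub _ (Real.log q),
    Real.exp_log hq']
  field_simp

theorem isSoftO_pow_mul_rpow_thresholdDegree (hc : IsSoftO 0 c) (hα : IsSoftO (-1) α) (k : ℕ) :
    IsSoftO (-2) fun q =>
      (q : ℝ) ^ (2 * k) * (1 - k * (1 - α q) / q) ^ thresholdDegree (c q) q - 1 -
        k * (2 * Real.log q * α q + (c q + (1 - k) * Real.log q) / q) := by
  set w : ℕ → ℝ := fun q =>
    k * (2 * Real.log q * α q + (c q + (1 - k) * Real.log q) / q) with hw_def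
  set E : ℕ → ℝ := fun q =>
    thresholdDegree (c q) q * Real.log (1 - k * (1 - α q) / q) + 2 * k * Real.log q with hE_def
  have hw : IsSoftO (-1) w :=
    (((IsSoftO.log.const_mul 2).mul hα).add
      ((hc.add (IsSoftO.log.const_mul (1 - k))).mul IsSoftO.natCast_inv)).const_mul k
  have hEw : IsSoftO (-2) fun q => E q - w q := by
    have hx : IsSoftO (-1) fun q => k * (1 - α q) - k :=
      (hα.const_mul (-k)).congr fun q => by ring
    refine (isSoftO_thresholdDegree_mul_log_one_sub_div hc hx).congr fun q => ?_
    simp only [hE_def, hw_def]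
    ring
  have hE : IsSoftO (-1) E :=
    ((hEw.mono (by norm_num)).add hw).congr fun q => by ring
  have hbase : IsSoftO (-1) fun q => k * (1 - α q) / q :=
    (((IsSoftO.const 1).sub (hα.mono (by norm_num))).const_mul k).mul IsSoftO.natCast_inv
  refine ((hE.exp_sub_one_sub (by norm_num)).add hEw).congr' ?_
  filter_upwards [hbase.eventually_lt (by norm_num) one_pos, eventually_gt_atTop 0] with q hlt hq
  have hq' : (0 : ℝ) < q := by exact_mod_cast hq
  have hexp : Real.exp (E q) =
      (q : ℝ) ^ (2 * k) * (1 - k * (1 - α q) / q) ^ thresholdDegree (c q) q := by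
    rw [Real.rpow_def_of_pos (sub_pos.mpr hlt), ← Real.exp_log (pow_pos hq' (2 * k)),
      ← Real.exp_add, Real.log_pow]
    simp only [hE_def]
    push_cast
    ring_nf
  rw [hexp]
  ring

theorem isSoftO_sum_sigmaTerm_sub_sum (hc : IsSoftO 0 c) (hα : IsSoftO (-1) α)
    (hα_nonneg : ∀ᶠ q in atTop, 0 ≤ α q) (k : ℕ) :
    IsSoftO (-(k + 1)) fun q =>
      ∑ i ∈ range q, sigmaTerm (thresholdDegree (c q) q) q (α q) i -
        ∑ i ∈ range k, sigmaTerm (thresholdDegree (c q) q) q (α q) i := by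
  have hy := isSoftO_sigmaRatio hc hα
  refine ((hy.pow (k + 1)).mono (by simp)).of_isBigO (IsBigO.of_bound 2 ?_)
  filter_upwards [eventually_thresholdDegree_nonneg hc, hα_nonneg,
    hy.eventually_lt (by norm_num) one_half_pos, eventually_ge_atTop k] with q hd hα hy hk
  refine (abs_sum_sigmaTerm_sub_sum_le hd hα (by linarith) hk).trans ?_
  have hpow : 0 ≤ sigmaRatio (thresholdDegree (c q) q) q (α q) ^ (k + 1) :=
    pow_nonneg sigmaRatio_nonneg _
  rw [Real.norm_of_nonneg hpow, div_le_iff₀ (by linarith)]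
  nlinarith

theorem isSoftO_mul_sigmaTerm_zero (hc : IsSoftO 0 c) (hα : IsSoftO (-1) α) :
    IsSoftO (-2) fun q =>
      q * sigmaTerm (thresholdDegree (c q) q) q (α q) 0 - 1 -
        (2 * Real.log q * α q + c q / q) :=
  (isSoftO_pow_mul_rpow_thresholdDegree hc hα 1).congr fun q => by
    simp only [sigmaTerm, pow_zero, zero_add, Nat.choose_one_right, Nat.cast_zero, Nat.cast_one]
    ring

theorem isSoftO_mul_sigmaTerm_one (hc : IsSoftO 0 c) (hα : IsSoftO (-1) α) :
    IsSoftO (-2) fun q =>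
      q * sigmaTerm (thresholdDegree (c q) q) q (α q) 1 + 1 / (2 * q) := by
  have hinv := IsSoftO.natCast_inv
  set P : ℕ → ℝ := fun q =>
    (q : ℝ) ^ (2 * 2) * (1 - (2 : ℕ) * (1 - α q) / q) ^ thresholdDegree (c q) q with hP_def
  have hP : IsSoftO (-1) fun q => P q - 1 := by
    have hlin : IsSoftO (-1) fun q =>
        2 * (2 * Real.log q * α q + (c q + -1 * Real.log q) / q) :=
      (((IsSoftO.log.const_mul 2).mul hα).add
        ((hc.add (IsSoftO.log.const_mul (-1))).mul hinv)).const_mul 2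
    refine (((isSoftO_pow_mul_rpow_thresholdDegree hc hα 2).mono (by norm_num)).add hlin).congr
      fun q => ?_
    simp only [hP_def]
    push_cast
    ring
  have hcoeff : IsSoftO 0 fun q => 1 - (q : ℝ)⁻¹ :=
    (IsSoftO.const 1).sub (hinv.mono (by norm_num))
  have herror : IsSoftO (-2) fun q =>
      2⁻¹ * ((q : ℝ)⁻¹ * ((q : ℝ)⁻¹ - (1 - (q : ℝ)⁻¹) * (P q - 1))) :=
    (hinv.mul (hinv.sub (hcoeff.mul hP))).const_mul 2⁻¹
  refine herror.congr' ?_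
  filter_upwards [eventually_ne_atTop 0] with q hq
  simp only [sigmaTerm, hP_def, one_add_one_eq_two, Nat.cast_choose_two, Nat.cast_one,
    Nat.cast_ofNat]
  field_simp
  ring

theorem isSoftO_mul_sum_sigmaTerm (hc : IsSoftO 0 c) (hα : IsSoftO (-1) α)
    (hα_nonneg : ∀ᶠ q in atTop, 0 ≤ α q) :
    IsSoftO (-2) fun q =>
      q * ∑ i ∈ range q, sigmaTerm (thresholdDegree (c q) q) q (α q) i - 1 -
        (2 * Real.log q * α q + c q / q - 1 / (2 * q)) := by
  have htail : IsSoftO (-2) fun q =>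
      q * (∑ i ∈ range q, sigmaTerm (thresholdDegree (c q) q) q (α q) i -
        ∑ i ∈ range 2, sigmaTerm (thresholdDegree (c q) q) q (α q) i) :=
    IsSoftO.natCast.mul (isSoftO_sum_sigmaTerm_sub_sum hc hα hα_nonneg 2)
  refine ((htail.add (isSoftO_mul_sigmaTerm_zero hc hα)).add
    (isSoftO_mul_sigmaTerm_one hc hα)).congr fun q => ?_
  simp only [sum_range_succ _ 1, sum_range_one]
  ring

theorem isSoftO_log_sum_sigmaTerm (hc : IsSoftO 0 c) (hα : IsSoftO (-1) α)
    (hα_nonneg : ∀ᶠ q in atTop, 0 ≤ α q) :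
    IsSoftO (-2) fun q =>
      Real.log (∑ i ∈ range q, sigmaTerm (thresholdDegree (c q) q) q (α q) i) + Real.log q -
        (2 * Real.log q * α q + c q / q - 1 / (2 * q)) := by
  set S : ℕ → ℝ := fun q => ∑ i ∈ range q, sigmaTerm (thresholdDegree (c q) q) q (α q) i
  have hS := isSoftO_mul_sum_sigmaTerm hc hα hα_nonneg
  have hmain : IsSoftO (-1) fun q =>
      2 * Real.log q * α q + (c q * (q : ℝ)⁻¹ - 2⁻¹ * (q : ℝ)⁻¹) :=
    ((IsSoftO.log.const_mul 2).mul hα).add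
      ((hc.mul IsSoftO.natCast_inv).sub (IsSoftO.natCast_inv.const_mul 2⁻¹))
  have hX : IsSoftO (-1) fun q => 1 - q * S q :=
    ((hS.mono (by norm_num)).add hmain).neg.congr fun q => by ring
  refine ((hX.log_one_sub_add (by norm_num)).add hS).congr' ?_
  filter_upwards [hX.eventually_lt (by norm_num) one_pos] with q hlt
  have hqS : (q : ℝ) * S q ≠ 0 := by linarith
  rw [sub_sub_cancel, Real.log_mul (left_ne_zero_of_mul hqS) (right_ne_zero_of_mul hqS)]
  ring

theorem isSoftO_half_thresholdDegree_mul_log (hc : IsSoftO 0 c) (hα : IsSoftO (-1) α) :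
    IsSoftO (-2) fun q =>
      thresholdDegree (c q) q / 2 * Real.log (1 - (1 - α q) ^ 2 / q) -
        (-Real.log q + 2 * Real.log q * α q + c q / (2 * q)) := by
  have hα_sq : IsSoftO (-2) fun q => α q ^ 2 := hα.pow 2
  have hx : IsSoftO (-1) fun q => (1 - α q) ^ 2 - 1 :=
    ((hα_sq.mono (by norm_num)).sub (hα.const_mul 2)).congr fun q => by ring
  exact (((isSoftO_thresholdDegree_mul_log_one_sub_div hc hx).const_mul 2⁻¹).sub
    (IsSoftO.log.mul hα_sq)).congr fun q => by ring

theorem isSoftO_SigmaRSBReal_sub (hc : IsSoftO 0 c) (hα : IsSoftO (-1) α)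
    (hα_nonneg : ∀ᶠ q in atTop, 0 ≤ α q) :
    IsSoftO (-2) fun q =>
      SigmaRSBReal (thresholdDegree (c q) q) q (α q) - (c q - 1) / (2 * q) :=
  ((isSoftO_log_sum_sigmaTerm hc hα hα_nonneg).sub
    (isSoftO_half_thresholdDegree_mul_log hc hα)).congr fun q => by
      simp only [SigmaRSBReal, sigmaTerm]
      ring

theorem IsSoftO.eventually_neg_of_sub_div {f : ℕ → ℝ}
    (hf : IsSoftO (-2) fun q => f q - (c q - 1) / (2 * q)) {ε : ℝ} (hε : 0 < ε)
    (hcε : ∀ᶠ q in atTop, c q ≤ 1 - ε) : ∀ᶠ q in atTop, f q < 0 := by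
  have hqf : IsSoftO (-1) fun q => q * (f q - (c q - 1) / (2 * q)) := IsSoftO.natCast.mul hf
  filter_upwards [hqf.eventually_lt (by norm_num) (half_pos hε), hcε, eventually_gt_atTop 0]
    with q hlt hcq hq
  have hq' : (0 : ℝ) < q := by exact_mod_cast hq
  have hcancel : (q : ℝ) * ((c q - 1) / (2 * q)) = (c q - 1) / 2 := by field_simp
  rw [mul_sub, hcancel] at hlt
  exact (pos_iff_neg_of_mul_neg (by linarith)).mp hq'

theorem SigmaRSB_asymptotics_general (hc : IsSoftO 0 c) (hα : IsSoftO (-1) α)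
    (hα_nonneg : ∀ᶠ q in atTop, 0 ≤ α q) :
    (∃ K : ℕ,
      (fun q : ℕ =>
          SigmaRSBReal ((2 * q - 1) * Real.log q - c q) q (α q) -
            (c q - 1) / (2 * q)) =O[atTop]
        (fun q : ℕ => (Real.log q) ^ K / (q : ℝ) ^ 2)) ∧
    (∀ ε : ℝ, 0 < ε → (∀ᶠ q : ℕ in atTop, c q ≤ 1 - ε) →
      ∀ᶠ q : ℕ in atTop,
        SigmaRSBReal ((2 * q - 1) * Real.log q - c q) q (α q) < 0) :=
  have h := isSoftO_SigmaRSBReal_sub hc hα hα_nonneg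
  ⟨isSoftO_neg_natCast_iff.mp h, fun _ hε hcε => h.eventually_neg_of_sub_div hε hcε⟩

end Asymptotics

/-- With `α = 1/(2q)` and `d = (2q-1) log q - c(q)` where `c = O(1)`,
`Σ_{d,q}(α) = (c-1)/(2q) + Õ(q⁻²)`; consequently if `c(q) ≤ 1 - ε` for a fixed `ε > 0`
then `Σ_{d,q}(α) < 0` for all sufficiently large `q`. -/
theorem SigmaRSB_asymptotics (c : ℕ → ℝ) (hc : ∃ M : ℝ, ∀ q : ℕ, |c q| ≤ M) :
    (∃ K : ℕ,
      (fun q : ℕ =>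
          SigmaRSBReal ((2 * q - 1) * Real.log q - c q) q (1 / (2 * q)) -
            (c q - 1) / (2 * q)) =O[atTop]
        (fun q : ℕ => (Real.log q) ^ K / (q : ℝ) ^ 2)) ∧
    (∀ ε : ℝ, 0 < ε → (∀ q : ℕ, c q ≤ 1 - ε) →
      ∀ᶠ q : ℕ in atTop,
        SigmaRSBReal ((2 * q - 1) * Real.log q - c q) q (1 / (2 * q)) < 0) := by
  obtain ⟨M, hM⟩ := hc
  have h := SigmaRSB_asymptotics_general (.of_abs_le hM) (.one_div_const_mul_natCast 2)
    (.of_forall fun q => by positivity)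
  exact ⟨h.1, fun ε hε hcε => h.2 ε hε (.of_forall hcε)⟩
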